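/- Let k be a positive even natural number and let D : (ZMod k → ZMod 2) → (ZMod k → ZMod 2) be the ℤ/2-linear map given by (D x)(j) = x(j-1) + x(j+1) when j is even and (D x)(j) = 0 when j is odd (parity of j ∈ ZMod k meaning parity of its canonical representative, which is well defined since k is even). Then the kernel of D has dimension k/2 + 1 as a vector space over ZMod 2. -/

import Mathlib

theorem aux_even_cast (k : ℕ) (hke : Even k) (n : ℕ) :
    Even ((n : ZMod k).val) ↔ Even n := by
  rw [ZMod.val_natCast, Nat.even_iff, Nat.even_iff, Nat.mod_mod_of_dvd _ hke.two_dvd]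

theorem aux_even_succ (k : ℕ) (hk : 0 < k) (hke : Even k) (j : ZMod k) :
    Even ((j + 1).val) ↔ ¬ Even j.val := by
  have : NeZero k := ⟨hk.ne'⟩
  have h : j + 1 = ((j.val + 1 : ℕ) : ZMod k) := by
    push_cast
    rw [ZMod.natCast_zmod_val]
  rw [h, aux_even_cast k hke, Nat.even_add_one]

/-- The kernel of the combinatorial log Floer differential has dimension `k/2 + 1`. -/
theorem log_floer_kernel_finrank
    (k : ℕ) (hk : 0 < k) (hke : Even k)
    (D : (ZMod k → ZMod 2) →ₗ[ZMod 2] (ZMod k → ZMod 2))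
    (hD : ∀ x : ZMod k → ZMod 2, ∀ j : ZMod k,
      D x j = if Even j.val then x (j - 1) + x (j + 1) else 0) :
    Module.finrank (ZMod 2) (LinearMap.ker D) = k / 2 + 1 := by
  have : NeZero k := ⟨hk.ne'⟩
  have key : ∀ x ∈ LinearMap.ker D, ∀ n : ℕ, x ((2 * n + 1 : ℕ) : ZMod k) = x 1 := by
    intro x hx n
    induction n with
    | zero => simp
    | succ n ih =>
      have h := hD x ((2 * n + 2 : ℕ) : ZMod k)
      rw [LinearMap.mem_ker.1 hx, if_pos ((aux_even_cast k hke _).2 ⟨n + 1, by ring⟩)] at h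
      have h1 : ((2 * n + 2 : ℕ) : ZMod k) - 1 = ((2 * n + 1 : ℕ) : ZMod k) := by
        push_cast; ring
      have h2 : ((2 * n + 2 : ℕ) : ZMod k) + 1 = ((2 * (n + 1) + 1 : ℕ) : ZMod k) := by
        push_cast; ring
      rw [h1, h2, ih] at h
      exact (CharTwo.add_eq_zero.1 h.symm).symm
  let F : LinearMap.ker D →ₗ[ZMod 2] ((Fin (k / 2) → ZMod 2) × ZMod 2) :=
    { toFun := fun x => (fun i => x.1 ((2 * i.1 : ℕ) : ZMod k), x.1 1)
      map_add' := fun x y => rfl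
      map_smul' := fun c x => rfl }
  have hF : Function.Bijective F := by
    constructor
    · rw [injective_iff_map_eq_zero]
      intro x hx
      have hx1 : ∀ i : Fin (k / 2), x.1 ((2 * i.1 : ℕ) : ZMod k) = 0 := fun i =>
        congrFun (congrArg Prod.fst hx) i
      have hx2 : x.1 1 = 0 := congrArg Prod.snd hx
      ext j
      have hj := ZMod.val_lt j
      rw [← ZMod.natCast_zmod_val j]
      obtain ⟨n, hn⟩ | ⟨n, hn⟩ := Nat.even_or_odd j.val
      · have := hx1 ⟨n, by obtain ⟨m, hm⟩ := hke; omega⟩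
        rw [hn, ← two_mul]
        exact this
      · rw [hn, key x.1 x.2, hx2]
        rfl
    · rintro ⟨f, c⟩
      have hlt : ∀ j : ZMod k, j.val / 2 < k / 2 := by
        intro j
        have hj := ZMod.val_lt j
        obtain ⟨m, hm⟩ := hke
        omega
      let x : ZMod k → ZMod 2 := fun j => if Even j.val then f ⟨j.val / 2, hlt j⟩ else c
      have hxo : ∀ j : ZMod k, ¬ Even j.val → x j = c := fun j hj => if_neg hj
      have hx : x ∈ LinearMap.ker D := by
        rw [LinearMap.mem_ker]
        ext j
        rw [hD]
        split_ifs with h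
        · have h1 : ¬ Even (j - 1).val := by
            have := aux_even_succ k hk hke (j - 1)
            rw [sub_add_cancel] at this
            exact this.1 h
          have h2 : ¬ Even (j + 1).val := by
            rw [aux_even_succ k hk hke]
            exact not_not.2 h
          rw [hxo _ h1, hxo _ h2]
          exact CharTwo.add_self_eq_zero c
        · rfl
      refine ⟨⟨x, hx⟩, Prod.ext ?_ ?_⟩
      · funext i
        change x ((2 * i.1 : ℕ) : ZMod k) = f i
        have he : Even (((2 * i.1 : ℕ) : ZMod k).val) :=
          (aux_even_cast k hke _).2 (even_two_mul _)
        have hv : ((2 * i.1 : ℕ) : ZMod k).val = 2 * i.1 :=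
          ZMod.val_cast_of_lt (by have := i.2; omega)
        refine (if_pos he).trans (congrArg f (Fin.ext ?_))
        change ((2 * i.1 : ℕ) : ZMod k).val / 2 = i.1
        omega
      · change x 1 = c
        apply hxo
        have := aux_even_cast k hke 1
        rw [Nat.cast_one] at this
        rw [this]
        decide
  rw [(LinearEquiv.ofBijective F hF).finrank_eq]
  simp
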